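/- For an integer n ≥ 1, define k_n(t) = 1/(2n·sin(t/n)) for t ∈ (0, 2π], and set h_n(t) = k_n(t) − k_{n+1}(t). Then for every integer n ≥ 4, h_n(t) > 0 for all t ∈ (0, 2π], and h_n is monotonically increasing on (0, 2π]: for all 0 < s < t ≤ 2π, h_n(s) ≤ h_n(t). -/

import Mathlib

open Real

/-!
With `x = t / a` one has `k_a(t) = φ(x) / (2t)` and `k_a'(t) = -ψ(x) / (2t²)`, where
`φ(x) = x / sin x` increases and `ψ(x) = x² cos x / sin² x` decreases on `(0, π)`. Increasing `a`
decreases `x`, so for `a < b` both `k_a - k_b` and its derivative are positive on `(0, aπ)`. The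
monotonicity of `ψ` amounts to `2 sin x cos x < x (1 + cos² x)`, which is `|sin x| < x` combined
with `2 |cos x| ≤ 1 + cos² x`.
-/

open Set

lemma two_mul_sin_mul_cos_lt {x : ℝ} (hx : 0 < x) : 2 * sin x * cos x < x * (1 + cos x ^ 2) := by
  have habs : |sin x| < x := by simpa [abs_of_pos hx] using abs_sin_lt_abs hx.ne'
  calc
    2 * sin x * cos x ≤ |sin x| * (2 * |cos x|) := by
      linarith [le_abs_self (sin x * cos x), abs_mul (sin x) (cos x)]
    _ ≤ |sin x| * (1 + cos x ^ 2) := by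
      gcongr
      linarith [sq_nonneg (1 - |cos x|), sq_abs (cos x)]
    _ < x * (1 + cos x ^ 2) := by gcongr

lemma strictMonoOn_div_sin : StrictMonoOn (fun x ↦ x / sin x) (Ioo 0 π) := by
  intro x hx y hy hxy
  have hsecant : sin y / y < sin x / x := by
    simpa using strictConcaveOn_sin_Icc.secant_strict_mono (left_mem_Icc.2 pi_pos.le)
      (Ioo_subset_Icc_self hx) (Ioo_subset_Icc_self hy) hx.1.ne' hy.1.ne' hxy
  simpa using inv_strictAnti₀ (div_pos (sin_pos_of_mem_Ioo hy) hy.1) hsecant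

lemma hasDerivAt_sq_mul_cos_div_sin_sq {x : ℝ} (hx : sin x ≠ 0) :
    HasDerivAt (fun x ↦ x ^ 2 * cos x / sin x ^ 2)
      (x * (2 * sin x * cos x - x * (1 + cos x ^ 2)) / sin x ^ 3) x := by
  convert! ((hasDerivAt_pow 2 x).mul (hasDerivAt_cos x)).div ((hasDerivAt_sin x).pow 2)
    (pow_ne_zero 2 hx) using 1
  simp only [Pi.mul_apply, Pi.pow_apply]
  field_simp
  linear_combination x ^ 2 * sin x * sin_sq_add_cos_sq x

lemma strictAntiOn_sq_mul_cos_div_sin_sq :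
    StrictAntiOn (fun x ↦ x ^ 2 * cos x / sin x ^ 2) (Ioo 0 π) := by
  have hderiv (x : ℝ) (hx : x ∈ Ioo 0 π) :=
    hasDerivAt_sq_mul_cos_div_sin_sq (sin_pos_of_mem_Ioo hx).ne'
  refine strictAntiOn_of_deriv_neg (convex_Ioo 0 π)
    (fun x hx ↦ (hderiv x hx).continuousAt.continuousWithinAt) fun x hx ↦ ?_
  rw [interior_Ioo] at hx
  rw [(hderiv x hx).deriv]
  exact div_neg_of_neg_of_pos
    (mul_neg_of_pos_of_neg hx.1 (sub_neg.2 (two_mul_sin_mul_cos_lt hx.1)))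
    (pow_pos (sin_pos_of_mem_Ioo hx) 3)

/-- The function `k_a(t) = 1 / (2a sin(t / a))`, with the integer index `n` of `k_n` replaced by a
real parameter `a`. -/
noncomputable def scaledCsc (a t : ℝ) : ℝ := 1 / (2 * a * sin (t / a))

lemma scaledCsc_eq_div_sin {t : ℝ} (a : ℝ) (ht : t ≠ 0) :
    scaledCsc a t = t / a / sin (t / a) / (2 * t) := by
  unfold scaledCsc
  field_simp

lemma hasDerivAt_scaledCsc {a t : ℝ} (hsin : sin (t / a) ≠ 0) :
    HasDerivAt (scaledCsc a)
      (-((t / a) ^ 2 * cos (t / a) / sin (t / a) ^ 2 / (2 * t ^ 2))) t := by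
  have ha : a ≠ 0 := by rintro rfl; simp at hsin
  have ht : t ≠ 0 := by rintro rfl; simp at hsin
  have hdenom : HasDerivAt (fun t ↦ 2 * a * sin (t / a)) (2 * a * (cos (t / a) * (1 / a))) t :=
    (((hasDerivAt_id t).div_const a).sin).const_mul (2 * a)
  convert! hdenom.inv (by positivity) using 1
  · ext; simp [scaledCsc]
  · field_simp

lemma div_mem_Ioo_zero_pi {a b t : ℝ} (ha : 0 < a) (hab : a ≤ b) (ht : t ∈ Ioo 0 (a * π)) :
    t / b ∈ Ioo 0 π := by
  have hb : 0 < b := ha.trans_le hab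
  refine ⟨div_pos ht.1 hb, (div_lt_iff₀' hb).2 (ht.2.trans_le ?_)⟩
  gcongr

lemma scaledCsc_lt_scaledCsc {a b t : ℝ} (ha : 0 < a) (hab : a < b) (ht : t ∈ Ioo 0 (a * π)) :
    scaledCsc b t < scaledCsc a t := by
  have ht₀ : 0 < t := ht.1
  rw [scaledCsc_eq_div_sin a ht₀.ne', scaledCsc_eq_div_sin b ht₀.ne']
  gcongr ?_ / _
  exact strictMonoOn_div_sin (div_mem_Ioo_zero_pi ha hab.le ht) (div_mem_Ioo_zero_pi ha le_rfl ht)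
    (div_lt_div_of_pos_left ht₀ ha hab)

lemma strictMonoOn_scaledCsc_sub_scaledCsc {a b : ℝ} (ha : 0 < a) (hab : a < b) :
    StrictMonoOn (fun t ↦ scaledCsc a t - scaledCsc b t) (Ioo 0 (a * π)) := by
  have hderiv (t : ℝ) (ht : t ∈ Ioo 0 (a * π)) :=
    (hasDerivAt_scaledCsc (sin_pos_of_mem_Ioo (div_mem_Ioo_zero_pi ha le_rfl ht)).ne').fun_sub
      (hasDerivAt_scaledCsc (sin_pos_of_mem_Ioo (div_mem_Ioo_zero_pi ha hab.le ht)).ne')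
  refine strictMonoOn_of_deriv_pos (convex_Ioo 0 (a * π))
    (fun t ht ↦ (hderiv t ht).continuousAt.continuousWithinAt) fun t ht ↦ ?_
  rw [interior_Ioo] at ht
  have ht₀ : 0 < t := ht.1
  rw [(hderiv t ht).deriv, sub_pos, neg_lt_neg_iff]
  gcongr ?_ / _
  exact strictAntiOn_sq_mul_cos_div_sin_sq (div_mem_Ioo_zero_pi ha hab.le ht)
    (div_mem_Ioo_zero_pi ha le_rfl ht) (div_lt_div_of_pos_left ht₀ ha hab)

theorem hn_pos_increasing_general {a b : ℝ} (ha : 0 < a) (hab : a < b) :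
    (∀ t ∈ Ioo 0 (a * π), 0 < scaledCsc a t - scaledCsc b t) ∧
      StrictMonoOn (fun t ↦ scaledCsc a t - scaledCsc b t) (Ioo 0 (a * π)) :=
  ⟨fun _ ht ↦ sub_pos.2 (scaledCsc_lt_scaledCsc ha hab ht),
    strictMonoOn_scaledCsc_sub_scaledCsc ha hab⟩

theorem hn_pos_increasing
    (k : ℕ → ℝ → ℝ) (hk : ∀ (n : ℕ) (t : ℝ), k n t = 1 / (2 * n * Real.sin (t / n)))
    (h : ℕ → ℝ → ℝ) (hh : ∀ (n : ℕ) (t : ℝ), h n t = k n t - k (n + 1) t)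
    (n : ℕ) (hn : 4 ≤ n) :
    (∀ t ∈ Set.Ioc (0 : ℝ) (2 * Real.pi), 0 < h n t) ∧
    (∀ s t : ℝ, 0 < s → s < t → t ≤ 2 * Real.pi → h n s ≤ h n t) := by
  have hlt : 2 * π < n * π := by gcongr; exact_mod_cast (by lia : 2 < n)
  have hfun : h n = fun t ↦ scaledCsc n t - scaledCsc (n + 1 : ℕ) t := by
    ext t
    rw [hh, hk, hk, scaledCsc, scaledCsc]
  obtain ⟨hpos, hmono⟩ := hn_pos_increasing_general (a := n) (b := (n + 1 : ℕ))
    (mod_cast (by lia : 0 < n)) (by simp)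
  rw [hfun]
  exact ⟨fun t ht ↦ hpos t ⟨ht.1, ht.2.trans_lt hlt⟩, fun s t hs hst ht ↦
    (hmono ⟨hs, by linarith⟩ ⟨by linarith, by linarith⟩ hst).le⟩
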